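/- Let A generate an α-times resolvent family {S_α(t)}_{t≥0} on X, where 1 < α < 2, let r > 0, let f : [0,r] → X be continuous and x, y ∈ D(A). If the fractional Cauchy problem D_t^α u = Au + f on [0,r], u(0) = x, u'(0) = y has a strong solution, then the function t ↦ (S_α*f)(t) = ∫_0^t S_α(t−s)f(s) ds is continuously differentiable on [0,r]. -/

import Mathlib

open MeasureTheory Set

/-- `g β t = t^(β-1)/Γ(β)`. -/
noncomputable def g (β t : ℝ) : ℝ := t ^ (β - 1) / Real.Gamma β

/-- `Pa α S t x = (g_{α-1} * S)(t) x = ∫_0^t g_{α-1}(t-s) S(s) x ds`. -/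
noncomputable def Pa {X : Type*} [NormedAddCommGroup X] [NormedSpace ℂ X]
    (α : ℝ) (S : ℝ → X →L[ℂ] X) (t : ℝ) (x : X) : X :=
  ∫ s in (0:ℝ)..t, g (α - 1) (t - s) • S s x

/-- `u` is a strong solution of `D_t^α u = A u + f` on `[0, r]`, `u 0 = x`, `u' 0 = y`:
`u` takes values in `D(A)` with `t ↦ A u t` continuous (encoded via the graph of `A`),
`u` is continuously differentiable on `[0, r]`,
`w t = ∫_0^t g_{2-α}(t-s) (u s - x - s y) ds` is twice continuously differentiable
on `[0, r]`, and `w'' t = A (u t) + f t` there. -/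
def IsStrongSolution {X : Type*} [NormedAddCommGroup X] [NormedSpace ℂ X]
    (α : ℝ) (A : X →ₗ.[ℂ] X) (r : ℝ) (f : ℝ → X) (x y : X) (u : ℝ → X) : Prop :=
  ∃ Au u' w' w'' : ℝ → X,
    ContinuousOn u (Set.Icc 0 r) ∧
    (∀ t ∈ Set.Icc (0:ℝ) r, (u t, Au t) ∈ A.graph) ∧
    ContinuousOn Au (Set.Icc 0 r) ∧
    (∀ t ∈ Set.Icc (0:ℝ) r, HasDerivWithinAt u (u' t) (Set.Icc 0 r) t) ∧
    ContinuousOn u' (Set.Icc 0 r) ∧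
    (∀ t ∈ Set.Icc (0:ℝ) r,
      HasDerivWithinAt (fun τ => ∫ s in (0:ℝ)..τ, g (2 - α) (τ - s) • (u s - x - s • y))
        (w' t) (Set.Icc 0 r) t) ∧
    (∀ t ∈ Set.Icc (0:ℝ) r, HasDerivWithinAt w' (w'' t) (Set.Icc 0 r) t) ∧
    ContinuousOn w'' (Set.Icc 0 r) ∧
    (∀ t ∈ Set.Icc (0:ℝ) r, w'' t = Au t + f t) ∧
    u 0 = x ∧ u' 0 = y

/-!
Write `J^β φ = g_β * φ`. A strong solution is mild: `u(t) = x + t y + J^α h` with `h = Au + f`,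
since `J^{2-α} (u - x - t y)` vanishes to first order at `0` and `J^{2-α}` is injective. Put
`v = u - x - t y = J^α h` and `F = f + Ax + t Ay`, so that `h = Av + F`. Integrating the resolvent
equation along `v` gives `S * v = J^1 v + J^α (S * Av)`. Every term is a `J^α`, because
`S * J^α h = J^α (S * h)` and `J^1 J^α h = J^α J^1 h`, and cancelling `J^α` leaves
`S * F = 1 * h`. Therefore `S * f = 1 * (h - S Ax - 1 * S Ay)`, a primitive of a continuous
function.
-/

open Filter Topology Asymptotics

section Kernel

lemma g_one (t : ℝ) : g 1 t = 1 := by simp [g]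

lemma g_nonneg {β t : ℝ} (hβ : 0 < β) (ht : 0 ≤ t) : 0 ≤ g β t :=
  div_nonneg (Real.rpow_nonneg ht _) (Real.Gamma_pos_of_pos hβ).le

lemma continuous_g {β : ℝ} (hβ : 1 ≤ β) : Continuous (g β) :=
  (Real.continuous_rpow_const (sub_nonneg.2 hβ)).div_const _

lemma intervalIntegrable_g {β : ℝ} (hβ : 0 < β) (a b : ℝ) :
    IntervalIntegrable (g β) volume a b :=
  (intervalIntegral.intervalIntegrable_rpow' (by linarith)).div_const _

lemma intervalIntegrable_g_sub_left {β : ℝ} (hβ : 0 < β) (t : ℝ) :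
    IntervalIntegrable (fun s => g β (t - s)) volume 0 t := by
  simpa using ((intervalIntegrable_g hβ 0 t).comp_sub_left t).symm

lemma integral_rpow_mul_sub_rpow {a b t : ℝ} (ha : 0 < a) (hb : 0 < b) (ht : 0 < t) :
    ∫ s in (0:ℝ)..t, s ^ (a - 1) * (t - s) ^ (b - 1)
      = t ^ (a + b - 1) * (Real.Gamma a * Real.Gamma b / Real.Gamma (a + b)) := by
  have hscaled := Complex.betaIntegral_scaled a b ht
  rw [Complex.betaIntegral_eq_Gamma_mul_div _ _ (by simpa) (by simpa)] at hscaled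
  apply Complex.ofReal_injective
  rw [← intervalIntegral.integral_ofReal]
  push_cast [Complex.ofReal_cpow ht.le, ← Complex.Gamma_ofReal]
  rw [← hscaled]
  refine intervalIntegral.integral_congr fun s hs => ?_
  rw [uIcc_of_le ht.le] at hs
  simp only [Complex.ofReal_cpow hs.1, Complex.ofReal_cpow (sub_nonneg.2 hs.2)]
  push_cast
  rfl

lemma integral_g_mul_g {a b s t : ℝ} (ha : 0 < a) (hb : 0 < b) (hst : s < t) :
    ∫ τ in s..t, g a (t - τ) * g b (τ - s) = g (a + b) (t - s) := by
  have hΓa := (Real.Gamma_pos_of_pos ha).ne'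
  have hΓb := (Real.Gamma_pos_of_pos hb).ne'
  calc ∫ τ in s..t, g a (t - τ) * g b (τ - s)
      = ∫ σ in (0:ℝ)..(t - s), g a (t - s - σ) * g b σ := by
        simpa using intervalIntegral.integral_comp_sub_right (a := s) (b := t)
          (fun σ => g a (t - s - σ) * g b σ) s
    _ = (∫ σ in (0:ℝ)..(t - s), σ ^ (b - 1) * (t - s - σ) ^ (a - 1)) /
          (Real.Gamma b * Real.Gamma a) := by
        rw [← intervalIntegral.integral_div]
        congr 1 with σ
        simp only [g]
        field_simp
    _ = g (a + b) (t - s) := by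
        rw [integral_rpow_mul_sub_rpow hb ha (sub_pos.2 hst), add_comm b a, g]
        field_simp

end Kernel

section Triangle

variable {E : Type*} [NormedAddCommGroup E] {a b : ℝ}

/-- The closed triangle `{(t, s) | a ≤ s ≤ t ≤ b}`, the domain of the integrand of a Volterra
integral `t ↦ ∫ s in a..t, K t s`. -/
def volterraTriangle (a b : ℝ) : Set (ℝ × ℝ) := {p | a ≤ p.2 ∧ p.2 ≤ p.1 ∧ p.1 ≤ b}

lemma volterraTriangle_subset (a b : ℝ) : volterraTriangle a b ⊆ Icc a b ×ˢ Icc a b :=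
  fun _ ⟨has, hst, htb⟩ => ⟨⟨has.trans hst, htb⟩, ⟨has, hst.trans htb⟩⟩

lemma isClosed_volterraTriangle (a b : ℝ) : IsClosed (volterraTriangle a b) :=
  (isClosed_le continuous_const continuous_snd).inter <|
    (isClosed_le continuous_snd continuous_fst).inter <|
      isClosed_le continuous_fst continuous_const

lemma isCompact_volterraTriangle (a b : ℝ) : IsCompact (volterraTriangle a b) :=
  (isCompact_Icc.prod isCompact_Icc).of_isClosed_subset (isClosed_volterraTriangle a b)
    (volterraTriangle_subset a b)

variable [NormedSpace ℝ E]

lemma integral_indicator_volterraTriangle_right {G : ℝ → ℝ → E} {t : ℝ} (ht : t ∈ Icc a b) :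
    ∫ s in a..b, (volterraTriangle a b).indicator G.uncurry (t, s) = ∫ s in a..t, G t s := by
  rw [← intervalIntegral.integral_indicator ht]
  refine intervalIntegral.integral_congr fun s hs => ?_
  rw [uIcc_of_le (ht.1.trans ht.2)] at hs
  exact indicator_eq_indicator (by simp [volterraTriangle, hs.1, ht.2]) rfl

lemma integral_indicator_volterraTriangle_left {G : ℝ → ℝ → E} {s : ℝ} (hs : s ∈ Icc a b) :
    ∫ t in a..b, (volterraTriangle a b).indicator G.uncurry (t, s) = ∫ t in s..b, G t s := by
  rw [intervalIntegral.integral_of_le (hs.1.trans hs.2), intervalIntegral.integral_of_le hs.2,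
    ← integral_Icc_eq_integral_Ioc, ← integral_Icc_eq_integral_Ioc,
    ← integral_indicator measurableSet_Icc, ← integral_indicator measurableSet_Icc]
  congr 1 with t
  simp only [volterraTriangle, indicator, mem_Icc, mem_ofPred_eq, Function.uncurry_apply_pair]
  have := hs.1
  split_ifs <;> grind

lemma integral_integral_swap_of_integrableOn_volterraTriangle {G : ℝ → ℝ → E} (hab : a ≤ b)
    (hG : IntegrableOn G.uncurry (volterraTriangle a b)) :
    ∫ t in a..b, ∫ s in a..t, G t s = ∫ s in a..b, ∫ t in s..b, G t s := by
  have hswap := intervalIntegral_intervalIntegral_swap (a := a) (b := b) (c := a) (d := b)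
    (F := fun t s => (volterraTriangle a b).indicator G.uncurry (t, s))
    (hG.integrable_indicator (isClosed_volterraTriangle a b).measurableSet).integrableOn
  calc ∫ t in a..b, ∫ s in a..t, G t s
      = ∫ t in a..b, ∫ s in a..b, (volterraTriangle a b).indicator G.uncurry (t, s) :=
        intervalIntegral.integral_congr fun t ht =>
          (integral_indicator_volterraTriangle_right (uIcc_of_le hab ▸ ht)).symm
    _ = ∫ s in a..b, ∫ t in a..b, (volterraTriangle a b).indicator G.uncurry (t, s) := hswap
    _ = ∫ s in a..b, ∫ t in s..b, G t s :=
        intervalIntegral.integral_congr fun s hs =>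
          integral_indicator_volterraTriangle_left (uIcc_of_le hab ▸ hs)

lemma integral_integral_swap_of_continuousOn_volterraTriangle {G : ℝ → ℝ → E} (hab : a ≤ b)
    (hG : ContinuousOn G.uncurry (volterraTriangle a b)) :
    ∫ t in a..b, ∫ s in a..t, G t s = ∫ s in a..b, ∫ t in s..b, G t s :=
  integral_integral_swap_of_integrableOn_volterraTriangle hab
    (hG.integrableOn_compact (isCompact_volterraTriangle a b))

lemma continuousOn_integral_of_continuousOn_volterraTriangle {G : ℝ → ℝ → E}
    (hG : ContinuousOn G.uncurry (volterraTriangle a b)) :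
    ContinuousOn (fun t => ∫ s in a..t, G t s) (Icc a b) := by
  -- Retracting `ℝ × ℝ` onto the triangle extends the integrand to the whole plane.
  let ρ : ℝ × ℝ → ℝ × ℝ := fun p =>
    (max a (min b p.1), max a (min p.2 (max a (min b p.1))))
  rcases lt_or_ge b a with hba | hab
  · simp [Icc_eq_empty_of_lt hba]
  have hρ : ∀ p, ρ p ∈ volterraTriangle a b := fun p => by
    refine ⟨le_max_left _ _, max_le (le_max_left _ _) (min_le_right _ _), ?_⟩
    exact max_le hab (min_le_left _ _)
  have hext : Continuous fun p => G.uncurry (ρ p) :=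
    hG.comp_continuous (by fun_prop) hρ
  refine (intervalIntegral.continuous_parametric_intervalIntegral_of_continuous
    (f := fun t s => G.uncurry (ρ (t, s))) (a₀ := a) hext continuous_id).continuousOn.congr
    fun t ht => intervalIntegral.integral_congr fun s hs => ?_
  rw [uIcc_of_le ht.1] at hs
  simp [ρ, ht.1, ht.2, hs.1, hs.2]

end Triangle

section Calculus

variable {E : Type*} [NormedAddCommGroup E] [NormedSpace ℝ E] [CompleteSpace E] {a b t : ℝ}

lemma hasDerivWithinAt_integral_Icc {φ : ℝ → E} (hφ : ContinuousOn φ (Icc a b))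
    (ht : t ∈ Icc a b) :
    HasDerivWithinAt (fun τ => ∫ s in a..τ, φ s) (φ t) (Icc a b) t := by
  have : Fact (t ∈ Icc a b) := ⟨ht⟩
  exact intervalIntegral.integral_hasDerivWithinAt_right
    ((hφ.mono (Icc_subset_Icc_right ht.2)).intervalIntegrable_of_Icc ht.1)
    (hφ.stronglyMeasurableAtFilter_nhdsWithin measurableSet_Icc t) (hφ t ht)

lemma integral_eq_sub_of_hasDerivWithinAt_Icc {F F' : ℝ → E}
    (hF : ∀ s ∈ Icc a b, HasDerivWithinAt F (F' s) (Icc a b) s)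
    (hF' : ContinuousOn F' (Icc a b)) (ht : t ∈ Icc a b) :
    ∫ s in a..t, F' s = F t - F a := by
  have hsub : Icc a t ⊆ Icc a b := Icc_subset_Icc_right ht.2
  exact intervalIntegral.integral_eq_sub_of_hasDerivAt_of_le ht.1
    (fun s hs => (hF s (hsub hs)).continuousWithinAt.mono hsub)
    (fun s hs => (hF s (hsub (Ioo_subset_Icc_self hs))).hasDerivAt
      (Icc_mem_nhds hs.1 (hs.2.trans_le ht.2)))
    ((hF'.mono hsub).intervalIntegrable_of_Icc ht.1)

end Calculus

section FractionalIntegral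

variable {E : Type*} [NormedAddCommGroup E] [NormedSpace ℝ E] {β γ r t : ℝ} {φ ψ : ℝ → E}

/-- The Riemann–Liouville fractional integral `g_β * φ` of order `β`, based at `0`. -/
noncomputable def fracInt (β : ℝ) (φ : ℝ → E) (t : ℝ) : E :=
  ∫ s in (0:ℝ)..t, g β (t - s) • φ s

lemma fracInt_apply_zero (β : ℝ) (φ : ℝ → E) : fracInt β φ 0 = 0 :=
  intervalIntegral.integral_same

lemma fracInt_one (φ : ℝ → E) (t : ℝ) : fracInt 1 φ t = ∫ s in (0:ℝ)..t, φ s := by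
  simp only [fracInt, g_one, one_smul]

lemma fracInt_congr (ht : t ∈ Icc 0 r) (h : EqOn φ ψ (Icc 0 r)) :
    fracInt β φ t = fracInt β ψ t := by
  refine intervalIntegral.integral_congr fun s hs => ?_
  rw [uIcc_of_le ht.1] at hs
  simp only [h (Icc_subset_Icc_right ht.2 hs)]

lemma intervalIntegrable_fracInt (hβ : 0 < β) (ht : 0 ≤ t) (hφ : ContinuousOn φ (Icc 0 t)) :
    IntervalIntegrable (fun s => g β (t - s) • φ s) volume 0 t :=
  (intervalIntegrable_g_sub_left hβ t).smul_continuousOn (by rwa [uIcc_of_le ht])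

lemma fracInt_add (hβ : 0 < β) (ht : 0 ≤ t) (hφ : ContinuousOn φ (Icc 0 t))
    (hψ : ContinuousOn ψ (Icc 0 t)) :
    fracInt β (φ + ψ) t = fracInt β φ t + fracInt β ψ t := by
  simp only [fracInt, Pi.add_apply, smul_add]
  exact intervalIntegral.integral_add (intervalIntegrable_fracInt hβ ht hφ)
    (intervalIntegrable_fracInt hβ ht hψ)

lemma continuousOn_fracInt (hβ : 1 ≤ β) (hφ : ContinuousOn φ (Icc 0 r)) :
    ContinuousOn (fracInt β φ) (Icc 0 r) := by
  refine continuousOn_integral_of_continuousOn_volterraTriangle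
    (G := fun t s => g β (t - s) • φ s) (ContinuousOn.smul ?_ ?_)
  · exact ((continuous_g hβ).comp (continuous_fst.sub continuous_snd)).continuousOn
  · exact hφ.comp continuous_snd.continuousOn fun p hp => (volterraTriangle_subset 0 r hp).2

lemma norm_fracInt_le {C : ℝ} (hβ : 0 < β) (ht : 0 < t) (hφ : ∀ s ∈ Icc 0 t, ‖φ s‖ ≤ C) :
    ‖fracInt β φ t‖ ≤ C * g (β + 1) t := by
  calc ‖fracInt β φ t‖ ≤ ∫ s in (0:ℝ)..t, g β (t - s) * C := by
        refine intervalIntegral.norm_integral_le_of_norm_le ht.le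
          (Eventually.of_forall fun s hs => ?_) ((intervalIntegrable_g_sub_left hβ t).mul_const C)
        have hg : 0 ≤ g β (t - s) := g_nonneg hβ (sub_nonneg.2 hs.2)
        rw [norm_smul, Real.norm_of_nonneg hg]
        exact mul_le_mul_of_nonneg_left (hφ s (Ioc_subset_Icc_self hs)) hg
    _ = C * g (β + 1) t := by
        rw [intervalIntegral.integral_mul_const, mul_comm]
        simpa [g_one] using congrArg (C * ·) (integral_g_mul_g hβ one_pos ht)

lemma isLittleO_fracInt_of_isBigO (hβ : 0 < β) (hφ : φ =O[𝓝[≥] 0] fun t : ℝ => t) :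
    fracInt β φ =o[𝓝[≥] 0] fun t : ℝ => t := by
  obtain ⟨C, hC, hbound⟩ := hφ.exists_nonneg
  obtain ⟨δ, hδ, hball⟩ := (mem_nhdsGE_iff_exists_Icc_subset).1 hbound.bound
  have hg_zero : Tendsto (g (β + 1)) (𝓝[≥] 0) (𝓝 0) := by
    have hcont := (continuous_g (by linarith : 1 ≤ β + 1)).tendsto 0
    rw [show g (β + 1) 0 = 0 by simp [g, hβ.ne']] at hcont
    exact hcont.mono_left nhdsWithin_le_nhds
  have hbigO : fracInt β φ =O[𝓝[≥] 0] fun t => g (β + 1) t * t := by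
    refine IsBigO.of_bound C ?_
    filter_upwards [Icc_mem_nhdsGE hδ] with t ht
    rcases ht.1.eq_or_lt with rfl | htpos
    · simp [fracInt_apply_zero]
    have hφt : ∀ s ∈ Icc 0 t, ‖φ s‖ ≤ C * t := fun s hs => by
      have hs' : ‖φ s‖ ≤ C * ‖s‖ := hball ⟨hs.1, hs.2.trans ht.2⟩
      rw [Real.norm_of_nonneg hs.1] at hs'
      exact hs'.trans (mul_le_mul_of_nonneg_left hs.2 hC)
    rw [Real.norm_of_nonneg (mul_nonneg (g_nonneg (by linarith) ht.1) ht.1)]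
    exact (norm_fracInt_le hβ htpos hφt).trans_eq (by ring)
  refine hbigO.trans_isLittleO ?_
  simpa only [one_mul] using
    ((isLittleO_one_iff ℝ).2 hg_zero).mul_isBigO (isBigO_refl (fun t : ℝ => t) (𝓝[≥] 0))

lemma integrableOn_g_mul_g_volterraTriangle (hβ : 0 < β) (hγ : 0 < γ) (ht : 0 ≤ t) :
    IntegrableOn (fun p : ℝ × ℝ => g β (t - p.1) * g γ (p.1 - p.2)) (volterraTriangle 0 t) := by
  have hβ_int : IntegrableOn (fun τ => g β (t - τ)) (Icc 0 t) :=
    (intervalIntegrable_iff_integrableOn_Icc_of_le ht).1 (intervalIntegrable_g_sub_left hβ t)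
  have hγ_int : IntegrableOn (fun σ => g γ (-σ)) (Icc (-t) 0) := by
    rw [← intervalIntegrable_iff_integrableOn_Icc_of_le (neg_nonpos.2 ht)]
    simpa using ((intervalIntegrable_g hγ 0 t).comp_sub_left 0).symm
  have hprod := hβ_int.mul_prod hγ_int
  rw [Measure.prod_restrict] at hprod
  have hshear := ((measurePreserving_prod_sub volume volume).restrict_preimage
    (measurableSet_Icc.prod measurableSet_Icc)).integrable_comp_of_integrable hprod
  simp only [Function.comp_def, neg_sub] at hshear
  refine IntegrableOn.mono_set hshear ?_
  rintro ⟨τ, s⟩ ⟨hs, hsτ, hτ⟩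
  exact ⟨⟨hs.trans hsτ, hτ⟩, by grind, by grind⟩

lemma fracInt_fracInt [CompleteSpace E] (hβ : 0 < β) (hγ : 0 < γ) (ht : 0 ≤ t)
    (hφ : ContinuousOn φ (Icc 0 t)) :
    fracInt β (fracInt γ φ) t = fracInt (β + γ) φ t := by
  have hint : IntegrableOn
      (fun p : ℝ × ℝ => (g β (t - p.1) * g γ (p.1 - p.2)) • φ p.2) (volterraTriangle 0 t) := by
    obtain ⟨C, hC⟩ := isCompact_Icc.exists_bound_of_continuousOn hφ
    have hmeas := (isClosed_volterraTriangle 0 t).measurableSet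
    refine (integrableOn_g_mul_g_volterraTriangle hβ hγ ht).smul_bdd C ?_ ?_
    · exact (hφ.comp continuous_snd.continuousOn
        fun p hp => (volterraTriangle_subset 0 t hp).2).aestronglyMeasurable hmeas
    · filter_upwards [ae_restrict_mem hmeas] with p hp
      exact hC _ (volterraTriangle_subset 0 t hp).2
  calc fracInt β (fracInt γ φ) t
      = ∫ τ in (0:ℝ)..t, ∫ s in (0:ℝ)..τ, (g β (t - τ) * g γ (τ - s)) • φ s := by
        simp only [fracInt, mul_smul, intervalIntegral.integral_smul]
    _ = ∫ s in (0:ℝ)..t, ∫ τ in s..t, (g β (t - τ) * g γ (τ - s)) • φ s :=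
        integral_integral_swap_of_integrableOn_volterraTriangle ht hint
    _ = fracInt (β + γ) φ t := by
        refine intervalIntegral.integral_congr_ae ?_
        filter_upwards [Measure.ae_ne volume t] with s hst hs
        rw [uIoc_of_le ht] at hs
        rw [intervalIntegral.integral_smul_const, integral_g_mul_g hβ hγ (hs.2.lt_of_ne hst)]

lemma fracInt_comm [CompleteSpace E] (hβ : 0 < β) (hγ : 0 < γ) (ht : 0 ≤ t)
    (hφ : ContinuousOn φ (Icc 0 t)) :
    fracInt β (fracInt γ φ) t = fracInt γ (fracInt β φ) t := by
  rw [fracInt_fracInt hβ hγ ht hφ, fracInt_fracInt hγ hβ ht hφ, add_comm]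

lemma eqOn_of_fracInt_one_eqOn [CompleteSpace E] (hr : 0 < r) (hφ : ContinuousOn φ (Icc 0 r))
    (hψ : ContinuousOn ψ (Icc 0 r)) (h : EqOn (fracInt 1 φ) (fracInt 1 ψ) (Icc 0 r)) :
    EqOn φ ψ (Icc 0 r) := fun t ht => by
  simp only [EqOn, fracInt_one] at h
  exact (uniqueDiffOn_Icc hr t ht).eq_deriv _ (hasDerivWithinAt_integral_Icc hφ ht)
    ((hasDerivWithinAt_integral_Icc hψ ht).congr (fun s hs => h hs) (h ht))

lemma eqOn_of_fracInt_natCast_eqOn [CompleteSpace E] (hr : 0 < r) {n : ℕ} (hn : 1 ≤ n) :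
    ∀ {φ ψ : ℝ → E}, ContinuousOn φ (Icc 0 r) → ContinuousOn ψ (Icc 0 r) →
      EqOn (fracInt n φ) (fracInt n ψ) (Icc 0 r) → EqOn φ ψ (Icc 0 r) := by
  induction n, hn using Nat.le_induction with
  | base => exact fun hφ hψ h => eqOn_of_fracInt_one_eqOn hr hφ hψ (by simpa using h)
  | succ n hn ih =>
    intro φ ψ hφ hψ h
    have hn_pos : (0:ℝ) < n := by exact_mod_cast hn
    refine eqOn_of_fracInt_one_eqOn hr hφ hψ
      (ih (continuousOn_fracInt le_rfl hφ) (continuousOn_fracInt le_rfl hψ) fun t ht => ?_)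
    have hsub : Icc 0 t ⊆ Icc 0 r := Icc_subset_Icc_right ht.2
    rw [fracInt_fracInt hn_pos one_pos ht.1 (hφ.mono hsub),
      fracInt_fracInt hn_pos one_pos ht.1 (hψ.mono hsub)]
    exact_mod_cast h ht

lemma eqOn_of_fracInt_eqOn [CompleteSpace E] (hβ : 0 < β) (hr : 0 < r)
    (hφ : ContinuousOn φ (Icc 0 r)) (hψ : ContinuousOn ψ (Icc 0 r))
    (h : EqOn (fracInt β φ) (fracInt β ψ) (Icc 0 r)) : EqOn φ ψ (Icc 0 r) := by
  obtain ⟨n, hn⟩ := exists_nat_gt β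
  have hn_one : 1 ≤ n := by exact_mod_cast hβ.trans hn
  refine eqOn_of_fracInt_natCast_eqOn hr hn_one hφ hψ fun t ht => ?_
  have hsub : Icc 0 t ⊆ Icc 0 r := Icc_subset_Icc_right ht.2
  rw [← sub_add_cancel (n : ℝ) β, ← fracInt_fracInt (sub_pos.2 hn) hβ ht.1 (hφ.mono hsub),
    ← fracInt_fracInt (sub_pos.2 hn) hβ ht.1 (hψ.mono hsub)]
  exact fracInt_congr ht h

-- As `φ t = O(t)`, the first derivative `w'` of the fractional integral vanishes at `0`; hence
-- integrating twice gives `g_{2-α} * φ = g_2 * h = g_{2-α} * (g_α * h)`.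
lemma eqOn_fracInt_of_hasDerivWithinAt_fracInt [CompleteSpace E] {α : ℝ} {φ' : E} {w' h : ℝ → E}
    (hα1 : 1 ≤ α) (hα2 : α < 2) (hr : 0 < r) (hφ : ContinuousOn φ (Icc 0 r)) (hφ0 : φ 0 = 0)
    (hφ' : HasDerivWithinAt φ φ' (Icc 0 r) 0)
    (hw : ∀ t ∈ Icc 0 r, HasDerivWithinAt (fracInt (2 - α) φ) (w' t) (Icc 0 r) t)
    (hw' : ∀ t ∈ Icc 0 r, HasDerivWithinAt w' (h t) (Icc 0 r) t)
    (hh : ContinuousOn h (Icc 0 r)) :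
    EqOn φ (fracInt α h) (Icc 0 r) := by
  have h2α : 0 < 2 - α := sub_pos.2 hα2
  have h0 : (0:ℝ) ∈ Icc 0 r := left_mem_Icc.2 hr.le
  have hw'0 : w' 0 = 0 := by
    refine (uniqueDiffOn_Icc hr 0 h0).eq_deriv _ (hw 0 h0) ?_
    have hφ_bigO : φ =O[𝓝[≥] 0] fun t : ℝ => t := by
      simpa [hφ0, nhdsWithin_Icc_eq_nhdsGE hr, Function.comp_def] using hφ'.isBigO_sub
    rw [hasDerivWithinAt_iff_isLittleO, nhdsWithin_Icc_eq_nhdsGE hr]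
    simpa [fracInt_apply_zero] using isLittleO_fracInt_of_isBigO h2α hφ_bigO
  have hw'_eq : EqOn w' (fracInt 1 h) (Icc 0 r) := fun t ht => by
    rw [fracInt_one, integral_eq_sub_of_hasDerivWithinAt_Icc hw' hh ht, hw'0, sub_zero]
  have hw_eq : EqOn (fracInt (2 - α) φ) (fracInt 1 (fracInt 1 h)) (Icc 0 r) := fun t ht => by
    rw [← fracInt_congr ht hw'_eq, fracInt_one, integral_eq_sub_of_hasDerivWithinAt_Icc hw
      (fun s hs => (hw' s hs).continuousWithinAt) ht, fracInt_apply_zero, sub_zero]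
  refine eqOn_of_fracInt_eqOn h2α hr hφ (continuousOn_fracInt hα1 hh) fun t ht => ?_
  have hht : ContinuousOn h (Icc 0 t) := hh.mono (Icc_subset_Icc_right ht.2)
  rw [hw_eq ht, fracInt_fracInt one_pos one_pos ht.1 hht,
    fracInt_fracInt h2α (by linarith) ht.1 hht]
  norm_num

end FractionalIntegral

section OperatorConvolution

variable {E F : Type*} [NormedAddCommGroup E] [NormedSpace ℝ E] [NormedAddCommGroup F]
  [NormedSpace ℝ F] {S : ℝ → E →L[ℝ] F} {β r t : ℝ} {φ ψ : ℝ → E}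

/-- The convolution `S * φ` of an operator-valued function with a vector-valued one. -/
noncomputable def opConv (S : ℝ → E →L[ℝ] F) (φ : ℝ → E) (t : ℝ) : F :=
  ∫ s in (0:ℝ)..t, S (t - s) (φ s)

lemma opConv_const (S : ℝ → E →L[ℝ] F) (x : E) (t : ℝ) :
    opConv S (fun _ => x) t = fracInt 1 (fun s => S s x) t := by
  simpa [opConv, fracInt_one] using
    intervalIntegral.integral_comp_sub_left (a := 0) (b := t) (fun s => S s x) t

lemma opConv_congr (ht : t ∈ Icc 0 r) (h : EqOn φ ψ (Icc 0 r)) :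
    opConv S φ t = opConv S ψ t := by
  refine intervalIntegral.integral_congr fun s hs => ?_
  rw [uIcc_of_le ht.1] at hs
  simp only [h (Icc_subset_Icc_right ht.2 hs)]

variable [CompleteSpace E]

lemma continuousOn_clm_apply_of_isCompact {T : Type*} [TopologicalSpace T] {U : T → E →L[ℝ] F}
    {K : Set T} (hK : IsCompact K) (hU : ∀ x, ContinuousOn (fun t => U t x) K) :
    ContinuousOn (fun p : T × E => U p.1 p.2) (K ×ˢ univ) := by
  obtain ⟨C, hC⟩ : ∃ C, ∀ t : K, ‖U t‖ ≤ C := banach_steinhaus fun x =>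
    (hK.exists_bound_of_continuousOn (hU x)).imp fun _ hx t => hx t t.2
  refine continuousOn_prod_of_continuousOn_lipschitzOnWith' _ C.toNNReal
    (fun t ht => ?_) fun x _ => hU x
  exact ((U t).lipschitz.weaken
    (NNReal.le_toNNReal_of_coe_le (by simpa using hC ⟨t, ht⟩))).lipschitzOnWith

lemma continuousOn_opConv_integrand (hS : ∀ x, ContinuousOn (fun t => S t x) (Ici 0))
    (hφ : ContinuousOn φ (Icc 0 r)) :
    ContinuousOn (fun p : ℝ × ℝ => S (p.1 - p.2) (φ p.2)) (volterraTriangle 0 r) := by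
  have hjoint := continuousOn_clm_apply_of_isCompact (isCompact_Icc (a := 0) (b := r))
    fun x => (hS x).mono Icc_subset_Ici_self
  refine hjoint.comp (f := fun p : ℝ × ℝ => (p.1 - p.2, φ p.2)) (ContinuousOn.prodMk ?_ ?_) ?_
  · exact (continuous_fst.sub continuous_snd).continuousOn
  · exact hφ.comp continuous_snd.continuousOn fun p hp => (volterraTriangle_subset 0 r hp).2
  · rintro p ⟨hs, hst, htr⟩
    exact ⟨⟨sub_nonneg.2 hst, by linarith⟩, mem_univ _⟩

lemma continuousOn_opConv (hS : ∀ x, ContinuousOn (fun t => S t x) (Ici 0))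
    (hφ : ContinuousOn φ (Icc 0 r)) : ContinuousOn (opConv S φ) (Icc 0 r) :=
  continuousOn_integral_of_continuousOn_volterraTriangle (continuousOn_opConv_integrand hS hφ)

lemma intervalIntegrable_opConv (hS : ∀ x, ContinuousOn (fun t => S t x) (Ici 0)) (ht : 0 ≤ t)
    (hφ : ContinuousOn φ (Icc 0 t)) :
    IntervalIntegrable (fun s => S (t - s) (φ s)) volume 0 t := by
  refine ContinuousOn.intervalIntegrable_of_Icc ht ?_
  exact (continuousOn_opConv_integrand hS hφ).comp (f := fun s => (t, s))
    (by fun_prop) fun s hs => ⟨hs.1, hs.2, le_rfl⟩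

lemma opConv_add (hS : ∀ x, ContinuousOn (fun t => S t x) (Ici 0)) (ht : 0 ≤ t)
    (hφ : ContinuousOn φ (Icc 0 t)) (hψ : ContinuousOn ψ (Icc 0 t)) :
    opConv S (φ + ψ) t = opConv S φ t + opConv S ψ t := by
  simp only [opConv, Pi.add_apply, map_add]
  exact intervalIntegral.integral_add (intervalIntegrable_opConv hS ht hφ)
    (intervalIntegrable_opConv hS ht hψ)

lemma fracInt_opConv (hβ : 1 ≤ β) (hS : ∀ x, ContinuousOn (fun t => S t x) (Ici 0)) (ht : 0 ≤ t)
    (hφ : ContinuousOn φ (Icc 0 t)) :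
    fracInt β (opConv S φ) t = ∫ s in (0:ℝ)..t, fracInt β (fun τ => S τ (φ s)) (t - s) := by
  have hcont : ContinuousOn (fun p : ℝ × ℝ => g β (t - p.1) • S (p.1 - p.2) (φ p.2))
      (volterraTriangle 0 t) :=
    ((continuous_g hβ).comp (continuous_const.sub continuous_fst)).continuousOn.smul
      (continuousOn_opConv_integrand hS hφ)
  calc fracInt β (opConv S φ) t
      = ∫ τ in (0:ℝ)..t, ∫ s in (0:ℝ)..τ, g β (t - τ) • S (τ - s) (φ s) := by
        simp only [fracInt, opConv, intervalIntegral.integral_smul]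
    _ = ∫ s in (0:ℝ)..t, ∫ τ in s..t, g β (t - τ) • S (τ - s) (φ s) :=
        integral_integral_swap_of_continuousOn_volterraTriangle ht hcont
    _ = ∫ s in (0:ℝ)..t, fracInt β (fun τ => S τ (φ s)) (t - s) := by
        refine intervalIntegral.integral_congr fun s _ => ?_
        simpa [fracInt] using intervalIntegral.integral_comp_sub_right (a := s) (b := t)
          (fun τ => g β (t - s - τ) • S τ (φ s)) s

lemma opConv_fracInt [CompleteSpace F] (hβ : 1 ≤ β)
    (hS : ∀ x, ContinuousOn (fun t => S t x) (Ici 0)) (ht : 0 ≤ t)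
    (hφ : ContinuousOn φ (Icc 0 t)) :
    opConv S (fracInt β φ) t = fracInt β (opConv S φ) t := by
  have hcont : ContinuousOn (fun p : ℝ × ℝ => g β (p.1 - p.2) • S (t - p.1) (φ p.2))
      (volterraTriangle 0 t) := by
    refine ((continuous_g hβ).comp (continuous_fst.sub continuous_snd)).continuousOn.smul ?_
    refine ((continuousOn_clm_apply_of_isCompact (isCompact_Icc (a := 0) (b := t))
      fun x => (hS x).mono Icc_subset_Ici_self).comp (f := fun p : ℝ × ℝ => (t - p.1, φ p.2))
      (ContinuousOn.prodMk (by fun_prop) ?_) ?_)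
    · exact hφ.comp continuous_snd.continuousOn fun p hp => (volterraTriangle_subset 0 t hp).2
    · intro p hp
      have hp1 := (volterraTriangle_subset 0 t hp).1
      exact ⟨⟨sub_nonneg.2 hp1.2, sub_le_self t hp1.1⟩, mem_univ _⟩
  calc opConv S (fracInt β φ) t
      = ∫ τ in (0:ℝ)..t, ∫ s in (0:ℝ)..τ, g β (τ - s) • S (t - τ) (φ s) := by
        refine intervalIntegral.integral_congr fun τ hτ => ?_
        rw [uIcc_of_le ht] at hτ
        have hint := intervalIntegrable_fracInt (one_pos.trans_le hβ) hτ.1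
          (hφ.mono (Icc_subset_Icc_right hτ.2))
        simp only [fracInt, ← ContinuousLinearMap.intervalIntegral_comp_comm _ hint, map_smul]
    _ = ∫ s in (0:ℝ)..t, ∫ τ in s..t, g β (τ - s) • S (t - τ) (φ s) :=
        integral_integral_swap_of_continuousOn_volterraTriangle ht hcont
    _ = ∫ s in (0:ℝ)..t, fracInt β (fun τ => S τ (φ s)) (t - s) := by
        refine intervalIntegral.integral_congr fun s _ => ?_
        simpa [fracInt] using intervalIntegral.integral_comp_sub_left (a := s) (b := t)
          (fun τ => g β (t - s - τ) • S τ (φ s)) t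
    _ = fracInt β (opConv S φ) t := (fracInt_opConv hβ hS ht hφ).symm

lemma opConv_affine [CompleteSpace F] (hS : ∀ x, ContinuousOn (fun t => S t x) (Ici 0))
    (ht : 0 ≤ t) (a b : E) :
    opConv S (fun s => a + s • b) t
      = fracInt 1 (fun s => S s a + fracInt 1 (fun σ => S σ b) s) t := by
  have hlinear : (fun s : ℝ => s • b) = fracInt 1 fun _ => b := by
    ext s
    simp [fracInt_one]
  have hSt : ∀ x, ContinuousOn (fun s => S s x) (Icc 0 t) := fun x =>
    (hS x).mono Icc_subset_Ici_self
  calc opConv S (fun s => a + s • b) t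
      = opConv S (fun _ => a) t + opConv S (fun s => s • b) t :=
        opConv_add hS ht continuousOn_const (by fun_prop)
    _ = fracInt 1 (fun s => S s a) t + fracInt 1 (fracInt 1 fun σ => S σ b) t := by
        rw [hlinear, opConv_fracInt le_rfl hS ht continuousOn_const, funext (opConv_const S b),
          opConv_const]
    _ = fracInt 1 (fun s => S s a + fracInt 1 (fun σ => S σ b) s) t :=
        (fracInt_add one_pos ht (hSt a) (continuousOn_fracInt le_rfl (hSt b))).symm

lemma hasDerivWithinAt_opConv_of_add_affine [CompleteSpace F] {h : ℝ → F} {a b : E}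
    (hS : ∀ x, ContinuousOn (fun t => S t x) (Ici 0)) (hφ : ContinuousOn φ (Icc 0 r))
    (hh : ContinuousOn h (Icc 0 r))
    (hconv : EqOn (opConv S (φ + fun s => a + s • b)) (fracInt 1 h) (Icc 0 r))
    (ht : t ∈ Icc 0 r) :
    HasDerivWithinAt (opConv S φ) (h t - (S t a + fracInt 1 (fun s => S s b) t))
      (Icc 0 r) t := by
  have hSr : ∀ x, ContinuousOn (fun s => S s x) (Icc 0 r) := fun x =>
    (hS x).mono Icc_subset_Ici_self
  have hformula : EqOn (opConv S φ) (fun t => (∫ s in (0:ℝ)..t, h s) -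
      ∫ s in (0:ℝ)..t, (S s a + fracInt 1 (fun σ => S σ b) s)) (Icc 0 r) := fun τ hτ => by
    have hτ_eq := hconv hτ
    rw [opConv_add hS hτ.1 (hφ.mono (Icc_subset_Icc_right hτ.2)) (by fun_prop),
      opConv_affine hS hτ.1, fracInt_one, fracInt_one] at hτ_eq
    exact eq_sub_of_add_eq hτ_eq
  exact ((hasDerivWithinAt_integral_Icc hh ht).sub (hasDerivWithinAt_integral_Icc
    ((hSr a).add (continuousOn_fracInt le_rfl (hSr b))) ht)).congr hformula (hformula ht)

end OperatorConvolution

section ResolventEquation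

variable {E : Type*} [NormedAddCommGroup E] [NormedSpace ℝ E] [CompleteSpace E]
  {S : ℝ → E →L[ℝ] E} {α r t : ℝ} {v Av f : ℝ → E}

lemma opConv_eq_fracInt_one_add_fracInt_opConv (hα : 1 ≤ α)
    (hS : ∀ x, ContinuousOn (fun t => S t x) (Ici 0)) (ht : 0 ≤ t)
    (hv : ContinuousOn v (Icc 0 t)) (hAv : ContinuousOn Av (Icc 0 t))
    (hres : ∀ s ∈ Icc 0 t, ∀ τ, 0 ≤ τ → S τ (v s) = v s + fracInt α (fun σ => S σ (Av s)) τ) :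
    opConv S v t = fracInt 1 v t + fracInt α (opConv S Av) t := by
  rw [← sub_eq_iff_eq_add', fracInt_one, opConv, ← intervalIntegral.integral_sub
    (intervalIntegrable_opConv hS ht hv) (hv.intervalIntegrable_of_Icc ht),
    fracInt_opConv hα hS ht hAv]
  refine intervalIntegral.integral_congr fun s hs => ?_
  rw [uIcc_of_le ht] at hs
  simp only [hres s hs _ (sub_nonneg.2 hs.2), add_sub_cancel_left]

lemma opConv_eqOn_fracInt_one_of_mild (hα : 1 ≤ α)
    (hS : ∀ x, ContinuousOn (fun t => S t x) (Ici 0)) (hr : 0 < r)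
    (hAv : ContinuousOn Av (Icc 0 r)) (hf : ContinuousOn f (Icc 0 r))
    (hres : ∀ s ∈ Icc 0 r, ∀ τ, 0 ≤ τ → S τ (v s) = v s + fracInt α (fun σ => S σ (Av s)) τ)
    (hmild : EqOn v (fracInt α (Av + f)) (Icc 0 r)) :
    EqOn (opConv S f) (fracInt 1 (Av + f)) (Icc 0 r) := by
  have hα0 : 0 < α := one_pos.trans_le hα
  have hh : ContinuousOn (Av + f) (Icc 0 r) := hAv.add hf
  have hv : ContinuousOn v (Icc 0 r) := (continuousOn_fracInt hα hh).congr hmild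
  have hJh : ContinuousOn (fracInt 1 (Av + f)) (Icc 0 r) := continuousOn_fracInt le_rfl hh
  have hSAv : ContinuousOn (opConv S Av) (Icc 0 r) := continuousOn_opConv hS hAv
  have hcancel : EqOn (opConv S (Av + f)) (fracInt 1 (Av + f) + opConv S Av) (Icc 0 r) := by
    refine eqOn_of_fracInt_eqOn hα0 hr (continuousOn_opConv hS hh) (hJh.add hSAv) fun t ht => ?_
    have hsub : Icc 0 t ⊆ Icc 0 r := Icc_subset_Icc_right ht.2
    calc fracInt α (opConv S (Av + f)) t
        = opConv S v t := by
          rw [← opConv_fracInt hα hS ht.1 (hh.mono hsub), opConv_congr ht hmild]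
      _ = fracInt 1 v t + fracInt α (opConv S Av) t :=
          opConv_eq_fracInt_one_add_fracInt_opConv hα hS ht.1 (hv.mono hsub) (hAv.mono hsub)
            fun s hs => hres s (hsub hs)
      _ = fracInt α (fracInt 1 (Av + f)) t + fracInt α (opConv S Av) t := by
          rw [fracInt_congr ht hmild, fracInt_comm one_pos hα0 ht.1 (hh.mono hsub)]
      _ = fracInt α (fracInt 1 (Av + f) + opConv S Av) t :=
          (fracInt_add hα0 ht.1 (hJh.mono hsub) (hSAv.mono hsub)).symm
  intro t ht
  have hsub : Icc 0 t ⊆ Icc 0 r := Icc_subset_Icc_right ht.2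
  have hsplit := hcancel ht
  rw [opConv_add hS ht.1 (hAv.mono hsub) (hf.mono hsub), Pi.add_apply, add_comm] at hsplit
  exact add_right_cancel hsplit

end ResolventEquation

section StrongSolution

variable {X : Type*} [NormedAddCommGroup X] [NormedSpace ℂ X] [CompleteSpace X] {α r : ℝ}
  {A : X →ₗ.[ℂ] X} {f u : ℝ → X} {x y : X}

lemma IsStrongSolution.exists_eqOn_fracInt (hα1 : 1 ≤ α) (hα2 : α < 2) (hr : 0 < r)
    (hu : IsStrongSolution α A r f x y u) :
    ∃ Au : ℝ → X, (∀ t ∈ Icc 0 r, (u t, Au t) ∈ A.graph) ∧ ContinuousOn Au (Icc 0 r) ∧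
      ContinuousOn f (Icc 0 r) ∧
      EqOn (fun t => u t - x - t • y) (fracInt α (Au + f)) (Icc 0 r) := by
  obtain ⟨Au, u', w', w'', hu_cont, hgraph, hAu, hu', -, hw, hw', hw'', heq, hu0, -⟩ := hu
  have hf : ContinuousOn f (Icc 0 r) :=
    (hw''.sub hAu).congr fun t ht => eq_sub_of_add_eq' (heq t ht).symm
  refine ⟨Au, hgraph, hAu, hf, ?_⟩
  have h0 : (0:ℝ) ∈ Icc 0 r := left_mem_Icc.2 hr.le
  exact eqOn_fracInt_of_hasDerivWithinAt_fracInt hα1 hα2 hr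
    ((hu_cont.sub continuousOn_const).sub (by fun_prop)) (by simp [hu0])
    (((hu' 0 h0).sub_const x).sub ((hasDerivWithinAt_id 0 _).smul_const y)) hw
    (fun t ht => (hw' t ht).congr_deriv (heq t ht)) (hAu.add hf)

lemma opConv_add_affine_eqOn_fracInt_one_of_mild {S : ℝ → X →L[ℝ] X} {Au : ℝ → X} {a b : X}
    (hα : 1 ≤ α) (hS : ∀ x, ContinuousOn (fun t => S t x) (Ici 0))
    (hres : ∀ t, 0 ≤ t → ∀ x y, (x, y) ∈ A.graph → S t x = x + fracInt α (fun s => S s y) t)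
    (hr : 0 < r) (hAu : ContinuousOn Au (Icc 0 r)) (hf : ContinuousOn f (Icc 0 r))
    (hu : ∀ t ∈ Icc 0 r, (u t, Au t) ∈ A.graph) (hx : (x, a) ∈ A.graph) (hy : (y, b) ∈ A.graph)
    (hmild : EqOn (fun t => u t - x - t • y) (fracInt α (Au + f)) (Icc 0 r)) :
    EqOn (opConv S (f + fun s => a + s • b)) (fracInt 1 (Au + f)) (Icc 0 r) := by
  have hgraph : ∀ t ∈ Icc 0 r, (u t - x - t • y, Au t - a - t • b) ∈ A.graph := fun t ht =>
    sub_mem (sub_mem (hu t ht) hx) (A.graph.smul_of_tower_mem t hy)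
  have hsum : (fun t => Au t - a - t • b) + (f + fun t => a + t • b) = Au + f := by
    ext t
    simp only [Pi.add_apply]
    abel
  rw [← hsum] at hmild ⊢
  exact opConv_eqOn_fracInt_one_of_mild hα hS hr (by fun_prop) (by fun_prop)
    (fun s hs τ hτ => hres τ hτ _ _ (hgraph s hs)) hmild

end StrongSolution

theorem stmt_10_general
    {X : Type*} [NormedAddCommGroup X] [NormedSpace ℂ X] [CompleteSpace X]
    (α : ℝ) (hα1 : 1 ≤ α) (hα2 : α < 2)
    (A : X →ₗ.[ℂ] X)
    (S : ℝ → X →L[ℂ] X)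
    (hS_cont : ∀ x : X, ContinuousOn (fun t => S t x) (Ici (0:ℝ)))
    (hS_eq : ∀ t : ℝ, 0 ≤ t → ∀ x y : X, (x, y) ∈ A.graph →
      S t x = x + ∫ s in (0:ℝ)..t, g α (t - s) • S s y)
    (r : ℝ) (hr : 0 < r) (f : ℝ → X) (x y : X) (hy : y ∈ A.domain)
    (hex : ∃ u : ℝ → X, IsStrongSolution α A r f x y u) :
    ∃ D : ℝ → X, ContinuousOn D (Icc 0 r) ∧
      ∀ t ∈ Icc (0:ℝ) r,
        HasDerivWithinAt (fun τ => ∫ s in (0:ℝ)..τ, S (τ - s) (f s)) (D t) (Icc 0 r) t := by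
  obtain ⟨u, hu⟩ := hex
  obtain ⟨Au, hgraph, hAu, hf, hmild⟩ := hu.exists_eqOn_fracInt hα1 hα2 hr
  have h0 : (0:ℝ) ∈ Icc 0 r := left_mem_Icc.2 hr.le
  have hu0 : u 0 = x := by simpa [fracInt_apply_zero, sub_eq_zero] using hmild h0
  obtain ⟨b, hb⟩ : ∃ b, (y, b) ∈ A.graph := A.mem_domain_iff.1 hy
  have hconv := opConv_add_affine_eqOn_fracInt_one_of_mild
    (S := fun t => (S t).restrictScalars ℝ) hα1 hS_cont hS_eq hr hAu hf hgraph
    (hu0 ▸ hgraph 0 h0) hb hmild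
  have hSr : ∀ z, ContinuousOn (fun t => S t z) (Icc 0 r) := fun z =>
    (hS_cont z).mono Icc_subset_Ici_self
  exact ⟨fun t => (Au + f) t - (S t (Au 0) + fracInt 1 (fun s => S s b) t),
    (hAu.add hf).sub ((hSr _).add (continuousOn_fracInt le_rfl (hSr b))),
    fun t ht => hasDerivWithinAt_opConv_of_add_affine hS_cont hf (hAu.add hf) hconv ht⟩

theorem stmt_10
    {X : Type*} [NormedAddCommGroup X] [NormedSpace ℂ X] [CompleteSpace X]
    (α : ℝ) (hα1 : 1 < α) (hα2 : α < 2)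
    (A : X →ₗ.[ℂ] X) (hA_closed : IsClosed (A.graph : Set (X × X)))
    (hA_dense : Dense (A.domain : Set X))
    (S : ℝ → X →L[ℂ] X)
    (hS_cont : ∀ x : X, ContinuousOn (fun t => S t x) (Ici (0:ℝ)))
    (hS_zero : S 0 = 1)
    (hS_dom : ∀ t : ℝ, 0 ≤ t → ∀ x ∈ A.domain, S t x ∈ A.domain)
    (hS_comm : ∀ t : ℝ, 0 ≤ t → ∀ x y : X, (x, y) ∈ A.graph → (S t x, S t y) ∈ A.graph)
    (hS_eq : ∀ t : ℝ, 0 ≤ t → ∀ x y : X, (x, y) ∈ A.graph →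
      S t x = x + ∫ s in (0:ℝ)..t, g α (t - s) • S s y)
    (r : ℝ) (hr : 0 < r) (f : ℝ → X) (hf : ContinuousOn f (Icc 0 r))
    (x y : X) (hx : x ∈ A.domain) (hy : y ∈ A.domain)
    (hex : ∃ u : ℝ → X, IsStrongSolution α A r f x y u) :
    ∃ D : ℝ → X, ContinuousOn D (Icc 0 r) ∧
      ∀ t ∈ Icc (0:ℝ) r,
        HasDerivWithinAt (fun τ => ∫ s in (0:ℝ)..τ, S (τ - s) (f s)) (D t) (Icc 0 r) t := by
  exact stmt_10_general α hα1.le hα2 A S hS_cont hS_eq r hr f x y hy hex
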